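/- arXiv:1811.10902 — 5 statements merged into one kernel-verified Lean document; each statement's English description precedes it below -/
import Mathlib

section
/- Let n be a natural number, c ≥ 0 and λ > 0 real numbers, and let A and B be real n×n symmetric positive semidefinite matrices such that the diagonal entries of the Hadamard product satisfy (A ∘ B)ᵢᵢ ≤ c for all i. Then Real.log(det(A ∘ B + λI)/λⁿ) ≤ rank(A) · rank(B) · Real.log((n·c + λ)/λ). -/
open Matrix

/-! A positive semidefinite matrix `K` of rank `r` has `r` nonzero eigenvalues `μ`, each at most
`tr K`, and `log (det (K + t • 1) / t ^ n)` is the sum of `log ((μ + t) / t)` over them. For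
`K = A ⊙ B`, every column is the pointwise product of a column of `A` and a column of `B`, so the
column space of `K` lies in the product of the two column spaces, taken in the algebra of column
vectors under pointwise multiplication; hence `r ≤ rank A * rank B`. -/

theorem finrank_submodule_mul_le {R S : Type*} [CommRing R] [StrongRankCondition R] [Semiring S]
    [Algebra R S] (M N : Submodule R S) [Module.Free R M] [Module.Finite R M] [Module.Free R N]
    [Module.Finite R N] :
    Module.finrank R (M * N : Submodule R S) ≤ Module.finrank R M * Module.finrank R N := by
  rw [← Submodule.mulMap_range, ← Module.finrank_tensorProduct]
  exact LinearMap.finrank_range_le _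

theorem rank_hadamard_le {m n K : Type*} [Fintype n] [Field K] (A B : Matrix m n K) :
    (A ⊙ B).rank ≤ A.rank * B.rank := by
  let colSpace (M : Matrix m n K) : Submodule K (m → K) := Submodule.span K (Set.range M.col)
  have colSpace_fg (M : Matrix m n K) : (colSpace M).FG := Submodule.fg_span (Set.finite_range _)
  have (M : Matrix m n K) : Module.Finite K (colSpace M) := .of_fg (colSpace_fg M)
  have : Module.Finite K (colSpace A * colSpace B : Submodule K (m → K)) :=
    .of_fg ((colSpace_fg A).mul (colSpace_fg B))
  have colSpace_hadamard_le : colSpace (A ⊙ B) ≤ colSpace A * colSpace B := by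
    refine Submodule.span_le.mpr ?_
    rintro _ ⟨j, rfl⟩
    exact Submodule.mul_mem_mul (Submodule.subset_span ⟨j, rfl⟩) (Submodule.subset_span ⟨j, rfl⟩)
  simp only [rank_eq_finrank_span_cols]
  exact (Submodule.finrank_mono colSpace_hadamard_le).trans (finrank_submodule_mul_le _ _)

section Spectral

open scoped ComplexOrder

variable {ι 𝕜 : Type*} [Fintype ι] [DecidableEq ι] [RCLike 𝕜] {K : Matrix ι ι 𝕜} {t : ℝ}

theorem det_add_smul_one_eq_prod_eigenvalues_add (hK : K.IsHermitian) (z : 𝕜) :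
    (K + z • (1 : Matrix ι ι 𝕜)).det = ∏ i, ((hK.eigenvalues i : 𝕜) + z) := by
  have eq_neg : K + z • (1 : Matrix ι ι 𝕜) = -(scalar ι (-z) - K) := by
    rw [scalar_apply, ← smul_one_eq_diagonal, neg_smul, neg_sub, sub_neg_eq_add]
  calc (K + z • (1 : Matrix ι ι 𝕜)).det
      = (-1) ^ Fintype.card ι * K.charpoly.eval (-z) := by
        rw [eq_neg, det_neg, eval_charpoly]
    _ = ∏ i, (-1) * (-z - (hK.eigenvalues i : 𝕜)) := by
        simp only [hK.charpoly_eq, Polynomial.eval_prod, Polynomial.eval_sub, Polynomial.eval_X,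
          Polynomial.eval_C, Finset.prod_mul_distrib, Finset.prod_const, Finset.card_univ]
    _ = ∏ i, ((hK.eigenvalues i : 𝕜) + z) := Finset.prod_congr rfl fun _ _ ↦ by ring

theorem log_det_add_smul_one_div_eq_sum (hK : K.PosSemidef) (ht : 0 < t) :
    Real.log (RCLike.re (K + t • (1 : Matrix ι ι 𝕜)).det / t ^ Fintype.card ι) =
      ∑ i, Real.log ((hK.isHermitian.eigenvalues i + t) / t) := by
  have ratio_ne_zero (i : ι) : (hK.isHermitian.eigenvalues i + t) / t ≠ 0 := by
    have := hK.eigenvalues_nonneg i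
    positivity
  have re_det : RCLike.re (K + t • (1 : Matrix ι ι 𝕜)).det =
      ∏ i, (hK.isHermitian.eigenvalues i + t) := by
    rw [RCLike.real_smul_eq_coe_smul (K := 𝕜),
      det_add_smul_one_eq_prod_eigenvalues_add hK.isHermitian]
    exact_mod_cast RCLike.ofReal_re (K := 𝕜) _
  rw [re_det, ← Finset.card_univ, ← Finset.prod_const, ← Finset.prod_div_distrib,
    Real.log_prod fun i _ ↦ ratio_ne_zero i]

theorem eigenvalues_le_re_trace (hK : K.PosSemidef) (i : ι) :
    hK.isHermitian.eigenvalues i ≤ RCLike.re K.trace := by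
  have re_trace : RCLike.re K.trace = ∑ j, hK.isHermitian.eigenvalues j := by
    rw [hK.isHermitian.trace_eq_sum_eigenvalues]
    exact_mod_cast RCLike.ofReal_re (K := 𝕜) _
  rw [re_trace]
  exact Finset.single_le_sum (fun j _ ↦ hK.eigenvalues_nonneg j) (Finset.mem_univ i)

theorem log_det_add_smul_one_div_le (hK : K.PosSemidef) (ht : 0 < t) :
    Real.log (RCLike.re (K + t • (1 : Matrix ι ι 𝕜)).det / t ^ Fintype.card ι) ≤
      K.rank * Real.log ((RCLike.re K.trace + t) / t) := by
  set eig := hK.isHermitian.eigenvalues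
  calc Real.log (RCLike.re (K + t • (1 : Matrix ι ι 𝕜)).det / t ^ Fintype.card ι)
      = ∑ i, Real.log ((eig i + t) / t) := log_det_add_smul_one_div_eq_sum hK ht
    _ = ∑ i with eig i ≠ 0, Real.log ((eig i + t) / t) := by
        refine (Finset.sum_filter_of_ne fun i _ ↦ mt fun (eig_eq_zero : eig i = 0) ↦ ?_).symm
        rw [eig_eq_zero, zero_add, div_self ht.ne', Real.log_one]
    _ ≤ ∑ i with eig i ≠ 0, Real.log ((RCLike.re K.trace + t) / t) := by
        refine Finset.sum_le_sum fun i _ ↦ ?_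
        have : 0 ≤ eig i := hK.eigenvalues_nonneg i
        have : eig i ≤ RCLike.re K.trace := eigenvalues_le_re_trace hK i
        gcongr
    _ = K.rank * Real.log ((RCLike.re K.trace + t) / t) := by
        rw [Finset.sum_const, nsmul_eq_mul, hK.isHermitian.rank_eq_card_non_zero_eigs,
          Fintype.card_subtype]

theorem log_det_hadamard_le_general {A B : Matrix ι ι 𝕜} {c lam : ℝ} (hlam : 0 < lam)
    (hAB : (A ⊙ B).PosSemidef) (hdiag : ∀ i, RCLike.re ((A ⊙ B) i i) ≤ c) :
    Real.log (RCLike.re (A ⊙ B + lam • (1 : Matrix ι ι 𝕜)).det / lam ^ Fintype.card ι) ≤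
      (A.rank * B.rank : ℕ) * Real.log ((Fintype.card ι * c + lam) / lam) := by
  have trace_nonneg : 0 ≤ RCLike.re (A ⊙ B).trace := (RCLike.nonneg_iff.mp hAB.trace_nonneg).1
  have trace_le : RCLike.re (A ⊙ B).trace ≤ Fintype.card ι * c := by
    simpa [trace] using Finset.sum_le_card_nsmul Finset.univ _ c fun i _ ↦ hdiag i
  have log_nonneg : 0 ≤ Real.log ((RCLike.re (A ⊙ B).trace + lam) / lam) :=
    Real.log_nonneg ((one_le_div hlam).mpr (le_add_of_nonneg_left trace_nonneg))
  calc Real.log (RCLike.re (A ⊙ B + lam • (1 : Matrix ι ι 𝕜)).det / lam ^ Fintype.card ι)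
      ≤ (A ⊙ B).rank * Real.log ((RCLike.re (A ⊙ B).trace + lam) / lam) :=
        log_det_add_smul_one_div_le hAB hlam
    _ ≤ (A.rank * B.rank : ℕ) * Real.log ((Fintype.card ι * c + lam) / lam) := by
        gcongr
        exact rank_hadamard_le A B

end Spectral

/-- Theorem 4 of the paper: if `A` and `B` are positive semidefinite `n × n` matrices and the
diagonal entries of their Hadamard product are bounded by `c`, then
`log(det(A ∘ B + λI)/λⁿ) ≤ rank(A) · rank(B) · log((n c + λ)/λ)`. -/
theorem log_det_hadamard_le (n : ℕ) (c lam : ℝ) (hc : 0 ≤ c) (hlam : 0 < lam)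
    (A B : Matrix (Fin n) (Fin n) ℝ) (hA : A.PosSemidef) (hB : B.PosSemidef)
    (hdiag : ∀ i, Matrix.hadamard A B i i ≤ c) :
    Real.log ((Matrix.hadamard A B + lam • (1 : Matrix (Fin n) (Fin n) ℝ)).det / lam ^ n) ≤
      (A.rank * B.rank : ℕ) * Real.log ((n * c + lam) / lam) := by
  simpa using log_det_hadamard_le_general hlam (hA.hadamard hB) hdiag
end

section
/- Let n and M be natural numbers, τ : Fin n → Fin M an assignment of observations to tasks, K_X a real n×n symmetric positive semidefinite matrix, and λ > 0. For μ ∈ [0,1] define the matrix A_μ by (A_μ)ᵢⱼ = K_X ᵢⱼ if τ(i) = τ(j) and (A_μ)ᵢⱼ = μ · K_X ᵢⱼ otherwise. Then for all 0 ≤ μ₁ ≤ μ₂ ≤ 1, det(A_{μ₂} + λI) ≤ det(A_{μ₁} + λI). -/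
open Matrix

/-!
Since `A_μ + λI` is the Gram matrix built from `K_X + λI` at similarity `μ`, it suffices to treat a
positive semidefinite matrix `A`, which by continuity may be taken positive definite. Let `D` be its
block diagonal part with respect to the tasks; the matrix at similarity `μ` is then the point
`(1 - μ) D + μ A` of the segment from `D` to `A`. Factoring `D = Bᴴ B` and conjugating by `B⁻¹`
turns `D` into the identity and `A` into a positive semidefinite matrix with eigenvalues `p i`, so
the determinant along the segment is `det D * ∏ i, (1 - μ + μ * p i)`. As `D⁻¹` is block diagonal it
only sees the blocks of `A`, whence `∑ i, (p i - 1) = tr (D⁻¹ A) - n = 0`: the logarithm of the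
product is concave in `μ` with slope `0` at `μ = 0`, hence nonincreasing for `μ ≥ 0`.
-/

open scoped ComplexOrder MatrixOrder Topology

section Determinant

lemma antitoneOn_prod_one_sub_add_mul {ι : Type*} {s : Finset ι} {p : ι → ℝ}
    (hp : ∀ i ∈ s, 0 ≤ p i) (hsum : ∑ i ∈ s, p i ≤ s.card) :
    AntitoneOn (fun t : ℝ => ∏ i ∈ s, (1 - t + t * p i)) (Set.Icc 0 1) := by
  intro a ha b hb hab
  have hfactor_nonneg {t : ℝ} (ht : t ∈ Set.Icc (0 : ℝ) 1) (i) (hi : i ∈ s) :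
      0 ≤ 1 - t + t * p i :=
    add_nonneg (sub_nonneg.2 ht.2) (mul_nonneg ht.1 (hp i hi))
  have hfactor_le (i) (hi : i ∈ s) :
      1 - b + b * p i ≤ (1 - a + a * p i) * Real.exp ((b - a) * (p i - 1)) := by
    calc 1 - b + b * p i
        ≤ (1 - a + a * p i) * ((b - a) * (p i - 1) + 1) := by
          linarith [mul_nonneg (mul_nonneg ha.1 (sub_nonneg.2 hab)) (sq_nonneg (p i - 1))]
      _ ≤ _ := mul_le_mul_of_nonneg_left (Real.add_one_le_exp _) (hfactor_nonneg ha i hi)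
  have hexponent : ∑ i ∈ s, (b - a) * (p i - 1) ≤ 0 := by
    rw [← Finset.mul_sum, Finset.sum_sub_distrib, Finset.sum_const, nsmul_one]
    exact mul_nonpos_of_nonneg_of_nonpos (sub_nonneg.2 hab) (sub_nonpos.2 hsum)
  calc ∏ i ∈ s, (1 - b + b * p i)
      ≤ ∏ i ∈ s, (1 - a + a * p i) * Real.exp ((b - a) * (p i - 1)) :=
        Finset.prod_le_prod (hfactor_nonneg hb) hfactor_le
    _ = (∏ i ∈ s, (1 - a + a * p i)) * Real.exp (∑ i ∈ s, (b - a) * (p i - 1)) := by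
        rw [Finset.prod_mul_distrib, Real.exp_sum]
    _ ≤ ∏ i ∈ s, (1 - a + a * p i) :=
        mul_le_of_le_one_right (Finset.prod_nonneg (hfactor_nonneg ha))
          (Real.exp_le_one_iff.2 hexponent)

variable {𝕜 n : Type*} [RCLike 𝕜] [Fintype n] [DecidableEq n]

lemma det_smul_one_add_smul_eq_prod_eigenvalues {T : Matrix n n 𝕜} (hT : T.IsHermitian)
    (s t : ℝ) :
    (s • (1 : Matrix n n 𝕜) + t • T).det = ((∏ i, (s + t * hT.eigenvalues i) : ℝ) : 𝕜) := by
  have hdiag : Unitary.conjStarAlgAut 𝕜 _ (star hT.eigenvectorUnitary)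
      ((s : 𝕜) • (1 : Matrix n n 𝕜) + (t : 𝕜) • T) =
        diagonal fun i => ((s + t * hT.eigenvalues i : ℝ) : 𝕜) := by
    rw [map_add, map_smul, map_smul, map_one, hT.conjStarAlgAut_star_eigenvectorUnitary,
      smul_one_eq_diagonal, ← diagonal_smul, diagonal_add]
    simp
  rw [RCLike.real_smul_eq_coe_smul (K := 𝕜) s, RCLike.real_smul_eq_coe_smul (K := 𝕜) t,
    RCLike.ofReal_prod, ← det_diagonal, ← hdiag, Unitary.conjStarAlgAut_star_apply,
    det_mul_right_comm, Unitary.coe_star_mul_self, one_mul]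

lemma antitoneOn_det_segment_one {T : Matrix n n 𝕜} (hT : T.PosSemidef)
    (htr : T.trace ≤ Fintype.card n) :
    AntitoneOn (fun t : ℝ => ((1 - t) • (1 : Matrix n n 𝕜) + t • T).det) (Set.Icc 0 1) := by
  have hsum : ∑ i, hT.isHermitian.eigenvalues i ≤ (Finset.univ : Finset n).card := by
    rw [hT.isHermitian.trace_eq_sum_eigenvalues] at htr
    exact_mod_cast htr
  intro a ha b hb hab
  simp only [det_smul_one_add_smul_eq_prod_eigenvalues hT.isHermitian]
  exact RCLike.ofReal_le_ofReal.2 <|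
    antitoneOn_prod_one_sub_add_mul (fun i _ => hT.eigenvalues_nonneg i) hsum ha hb hab

theorem antitoneOn_det_segment {D A : Matrix n n 𝕜} (hD : D.PosDef) (hA : A.PosSemidef)
    (htr : (D⁻¹ * A).trace ≤ Fintype.card n) :
    AntitoneOn (fun t : ℝ => ((1 - t) • D + t • A).det) (Set.Icc 0 1) := by
  obtain ⟨B, hB, hDB⟩ :=
    CStarAlgebra.isStrictlyPositive_iff_eq_star_mul_self.1 hD.isStrictlyPositive
  rw [star_eq_conjTranspose] at hDB
  have hBinv : B⁻¹ * B = 1 := nonsing_inv_mul B ((isUnit_iff_isUnit_det B).1 hB)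
  set T := B⁻¹ᴴ * A * B⁻¹ with hT_def
  have hTtr : T.trace = (D⁻¹ * A).trace := by
    rw [hDB, Matrix.mul_inv_rev, ← conjTranspose_nonsing_inv, hT_def, trace_mul_comm, mul_assoc]
  have hBT : Bᴴ * T * B = A := by
    calc Bᴴ * T * B = (B⁻¹ * B)ᴴ * A * (B⁻¹ * B) := by
          simp only [hT_def, conjTranspose_mul, mul_assoc]
      _ = A := by rw [hBinv, conjTranspose_one, one_mul, mul_one]
  have hcongr (t : ℝ) : ((1 - t) • D + t • A).det =
      D.det * ((1 - t) • (1 : Matrix n n 𝕜) + t • T).det := by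
    have hfactor : (1 - t) • D + t • A = Bᴴ * ((1 - t) • (1 : Matrix n n 𝕜) + t • T) * B := by
      simp only [hDB, ← hBT, mul_add, add_mul, mul_smul_comm, smul_mul_assoc, mul_one]
    rw [hfactor, hDB, det_mul, det_mul, det_mul, mul_right_comm]
  intro a ha b hb hab
  simp only [hcongr]
  exact mul_le_mul_of_nonneg_left
    (antitoneOn_det_segment_one (hA.conjTranspose_mul_mul_same B⁻¹) (hTtr.trans_le htr) ha hb hab)
    hD.det_pos.le

end Determinant

lemma inv_apply_eq_zero_of_block_ne {R α n : Type*} [CommRing R] [Fintype n] [DecidableEq n]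
    {τ : n → α} {A : Matrix n n R} (hA : ∀ i j, τ i ≠ τ j → A i j = 0) {i j : n}
    (hij : τ i ≠ τ j) : A⁻¹ i j = 0 := by
  classical
  -- `A`, and with it `A⁻¹`, commutes with the projection `P` onto the block of `i`.
  let P : Matrix n n R := diagonal fun k => if τ k = τ i then 1 else 0
  have hPA : Commute P A := by
    ext k l
    by_cases h : τ k = τ l
    · simp [P, h]
    · simp [P, hA k l h]
  have hPinv : P * A⁻¹ = A⁻¹ * P := by
    simpa only [Matrix.zpow_neg_one] using (Matrix.Commute.zpow_right hPA (-1)).eq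
  simpa [P, hij.symm] using congrFun₂ hPinv i j

section AugmentedGram

variable {R α n : Type*} [CommRing R] [DecidableEq α]

/-- The task-similarity kernel `k_Z` for which any two distinct tasks have similarity `μ`. -/
def uniformSimilarity (α : Type*) [DecidableEq α] (μ : R) : Matrix α α R :=
  of fun z z' => if z = z' then 1 else μ

lemma uniformSimilarity_zero : uniformSimilarity α (0 : R) = 1 := by
  ext z z'
  simp [uniformSimilarity, one_apply]

/-- The Gram matrix `A_μ` of the product kernel `k_Z · k_X`, where `K` is the Gram matrix of `k_X`
at the observations, observation `i` belongs to the task `τ i`, and `k_Z` is `uniformSimilarity`. -/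
def augmentedGram (τ : n → α) (K : Matrix n n R) (μ : R) : Matrix n n R :=
  K ⊙ (uniformSimilarity α μ).submatrix τ τ

lemma augmentedGram_eq_of (τ : n → α) (K : Matrix n n R) (μ : R) :
    augmentedGram τ K μ = of fun i j => if τ i = τ j then K i j else μ * K i j := by
  ext i j
  simp [augmentedGram, uniformSimilarity, mul_comm]

lemma augmentedGram_apply (τ : n → α) (K : Matrix n n R) (μ : R) (i j : n) :
    augmentedGram τ K μ i j = if τ i = τ j then K i j else μ * K i j := by
  rw [augmentedGram_eq_of, of_apply]

lemma augmentedGram_add_smul_one [DecidableEq n] (τ : n → α) (K : Matrix n n R) (c μ : R) :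
    augmentedGram τ (K + c • (1 : Matrix n n R)) μ =
      augmentedGram τ K μ + c • (1 : Matrix n n R) := by
  ext i j
  obtain rfl | hij := eq_or_ne i j <;> simp [augmentedGram_apply, *]

lemma augmentedGram_eq_segment (τ : n → α) (K : Matrix n n R) (μ : R) :
    augmentedGram τ K μ = (1 - μ) • augmentedGram τ K 0 + μ • K := by
  ext i j
  by_cases h : τ i = τ j
  · simp [augmentedGram_apply, h, sub_mul]
  · simp [augmentedGram_apply, h]

lemma trace_inv_augmentedGram_zero_mul [Fintype n] [DecidableEq n] (τ : n → α) {A : Matrix n n R}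
    (hunit : IsUnit (augmentedGram τ A 0)) :
    ((augmentedGram τ A 0)⁻¹ * A).trace = Fintype.card n := by
  set D := augmentedGram τ A 0
  have hinv {i j : n} (h : τ i ≠ τ j) : D⁻¹ i j = 0 :=
    inv_apply_eq_zero_of_block_ne (fun k l hkl => by simp [D, augmentedGram_apply, hkl]) h
  have hentry (i j : n) : D⁻¹ i j * A j i = D⁻¹ i j * D j i := by
    by_cases h : τ i = τ j
    · simp [D, augmentedGram_apply, h]
    · simp [hinv h]
  calc (D⁻¹ * A).trace = (D⁻¹ * D).trace := by simp only [trace, diag_apply, mul_apply, hentry]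
    _ = Fintype.card n := by
      rw [nonsing_inv_mul _ ((isUnit_iff_isUnit_det D).1 hunit), trace_one]

variable {𝕜 : Type*} [RCLike 𝕜]

lemma posSemidef_augmentedGram_zero (τ : n → α) {K : Matrix n n 𝕜} (hK : K.PosSemidef) :
    (augmentedGram τ K 0).PosSemidef := by
  rw [augmentedGram, uniformSimilarity_zero]
  exact hK.hadamard (PosSemidef.one.submatrix τ)

variable [Fintype n] [DecidableEq n]

lemma antitoneOn_det_augmentedGram_of_posDef (τ : n → α) {A : Matrix n n 𝕜} (hA : A.PosSemidef)
    (hD : (augmentedGram τ A 0).PosDef) :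
    AntitoneOn (fun μ : ℝ => (augmentedGram τ A (μ : 𝕜)).det) (Set.Icc 0 1) := by
  have hseg (μ : ℝ) : augmentedGram τ A (μ : 𝕜) = (1 - μ) • augmentedGram τ A 0 + μ • A := by
    rw [augmentedGram_eq_segment]
    ext
    simp [RCLike.real_smul_eq_coe_mul]
  simp only [hseg]
  exact antitoneOn_det_segment hD hA (trace_inv_augmentedGram_zero_mul τ hD.isUnit).le

theorem det_uniform_similarity_antitone_general (τ : n → α) {K : Matrix n n 𝕜}
    (hK : K.PosSemidef) :
    AntitoneOn (fun μ : ℝ => (augmentedGram τ K (μ : 𝕜)).det) (Set.Icc 0 1) := by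
  intro μ₁ hμ₁ μ₂ hμ₂ hμ₁₂
  have hreg {ε : ℝ} (hε : 0 < ε) :
      (augmentedGram τ (K + (ε : 𝕜) • (1 : Matrix n n 𝕜)) (μ₂ : 𝕜)).det ≤
      (augmentedGram τ (K + (ε : 𝕜) • (1 : Matrix n n 𝕜)) (μ₁ : 𝕜)).det := by
    have hone : ((ε : 𝕜) • (1 : Matrix n n 𝕜)).PosDef := PosDef.one.smul (by exact_mod_cast hε)
    refine antitoneOn_det_augmentedGram_of_posDef τ (hK.add hone.posSemidef) ?_ hμ₁ hμ₂ hμ₁₂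
    rw [augmentedGram_add_smul_one]
    exact PosDef.posSemidef_add (posSemidef_augmentedGram_zero τ hK) hone
  have hlim (μ : ℝ) : Filter.Tendsto
      (fun ε : ℝ => (augmentedGram τ (K + (ε : 𝕜) • (1 : Matrix n n 𝕜)) (μ : 𝕜)).det)
      (𝓝[>] 0) (𝓝 (augmentedGram τ K (μ : 𝕜)).det) := by
    simp only [augmentedGram_add_smul_one]
    have hcont : Continuous fun ε : ℝ =>
        (augmentedGram τ K (μ : 𝕜) + (ε : 𝕜) • (1 : Matrix n n 𝕜)).det := by fun_prop
    simpa using (hcont.tendsto 0).mono_left nhdsWithin_le_nhds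
  exact le_of_tendsto_of_tendsto (hlim μ₂) (hlim μ₁)
    (Filter.eventually_of_mem self_mem_nhdsWithin fun _ => hreg)

end AugmentedGram

/-- Theorem 5 of the paper: with uniform inter-task similarity `μ`, the determinant
`det(A_μ + λI)` of the regularized augmented Gram matrix is nonincreasing in `μ`,
where `(A_μ)ᵢⱼ = K_X i j` if observations `i, j` belong to the same task and
`(A_μ)ᵢⱼ = μ · K_X i j` otherwise. -/
theorem det_uniform_similarity_antitone (n M : ℕ) (τ : Fin n → Fin M)
    (KX : Matrix (Fin n) (Fin n) ℝ) (hKX : KX.PosSemidef)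
    (lam : ℝ) (hlam : 0 < lam)
    (μ₁ μ₂ : ℝ) (hμ₁ : 0 ≤ μ₁) (hμ₁₂ : μ₁ ≤ μ₂) (hμ₂ : μ₂ ≤ 1) :
    ((Matrix.of fun i j => if τ i = τ j then KX i j else μ₂ * KX i j) +
        lam • (1 : Matrix (Fin n) (Fin n) ℝ)).det ≤
    ((Matrix.of fun i j => if τ i = τ j then KX i j else μ₁ * KX i j) +
        lam • (1 : Matrix (Fin n) (Fin n) ℝ)).det := by
  simp only [← augmentedGram_eq_of, ← augmentedGram_add_smul_one]
  exact det_uniform_similarity_antitone_general τ (hKX.add (PosSemidef.one.smul hlam.le))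
    ⟨hμ₁, hμ₁₂.trans hμ₂⟩ ⟨hμ₁.trans hμ₁₂, hμ₂⟩ hμ₁₂
end

section
/- Let d, p, n₁, n₂ be natural numbers and λ > 0 a real number. Let Φ₁ be a real d×n₁ matrix, Ψ₁ a real p×n₁ matrix, Φ₂ a real d×n₂ matrix, and Ψ₂ a real p×n₂ matrix. Define K₁ = Φ₁ᵀΦ₁, K₂ = Φ₂ᵀΦ₂, L₁ = Ψ₁ᵀΨ₁, L₂ = Ψ₂ᵀΨ₂, K₁₂ = Φ₁ᵀΦ₂, L₂₁ = Ψ₂ᵀΨ₁, and the operators O₁ = Ψ₁(K₁+λI)⁻¹Φ₁ᵀ and O₂ = Ψ₂(K₂+λI)⁻¹Φ₂ᵀ (both p×d matrices). Then the squared Frobenius norm satisfies ‖O₁ − O₂‖² = tr((K₁+λI)⁻¹K₁(K₁+λI)⁻¹L₁) − 2·tr((K₁+λI)⁻¹K₁₂(K₂+λI)⁻¹L₂₁) + tr((K₂+λI)⁻¹K₂(K₂+λI)⁻¹L₂). -/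
open Matrix

section TransposeTrace

variable {m n R : Type*} [Fintype m] [Fintype n]

theorem trace_transpose_mul_comm [AddCommMonoid R] [CommMagma R] (A B : Matrix m n R) :
    trace (Aᵀ * B) = trace (Bᵀ * A) := by
  rw [trace_mul_comm, ← trace_transpose_mul, transpose_transpose]

theorem trace_transpose_mul_self_sub [CommRing R] (A B : Matrix m n R) :
    trace ((A - B)ᵀ * (A - B)) = trace (Aᵀ * A) - 2 * trace (Bᵀ * A) + trace (Bᵀ * B) := by
  rw [transpose_sub, Matrix.sub_mul, Matrix.mul_sub, Matrix.mul_sub, trace_sub, trace_sub,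
    trace_sub, trace_transpose_mul_comm A B]
  ring

end TransposeTrace

theorem isSymm_inv_transpose_mul_self_add_smul_one {d n R : Type*} [Fintype d] [Fintype n]
    [DecidableEq n] [CommRing R] (Φ : Matrix d n R) (c : R) :
    (Φᵀ * Φ + c • (1 : Matrix n n R))⁻¹.IsSymm := by
  have hgram : (Φᵀ * Φ).IsSymm := by rw [IsSymm, transpose_mul, transpose_transpose]
  exact (hgram.add (isSymm_one.smul c)).inv

section GramMatrices

variable {d p m₁ n₁ m₂ n₂ R : Type*} [Fintype d] [Fintype p] [Fintype m₁] [Fintype n₁]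
  [Fintype m₂] [Fintype n₂]

theorem trace_transpose_mul_eq_trace_gram [NonUnitalCommSemiring R]
    (Φ₁ : Matrix d n₁ R) (Ψ₁ : Matrix p m₁ R) (W₁ : Matrix m₁ n₁ R)
    (Φ₂ : Matrix d n₂ R) (Ψ₂ : Matrix p m₂ R) (W₂ : Matrix m₂ n₂ R) :
    trace ((Ψ₂ * W₂ * Φ₂ᵀ)ᵀ * (Ψ₁ * W₁ * Φ₁ᵀ)) =
      trace (W₁ * (Φ₁ᵀ * Φ₂) * W₂ᵀ * (Ψ₂ᵀ * Ψ₁)) := by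
  calc trace ((Ψ₂ * W₂ * Φ₂ᵀ)ᵀ * (Ψ₁ * W₁ * Φ₁ᵀ))
      = trace ((Φ₂ * W₂ᵀ * Ψ₂ᵀ * Ψ₁) * (W₁ * Φ₁ᵀ)) := by
        simp only [transpose_mul, transpose_transpose, Matrix.mul_assoc]
    _ = trace ((W₁ * Φ₁ᵀ) * (Φ₂ * W₂ᵀ * Ψ₂ᵀ * Ψ₁)) := trace_mul_comm _ _
    _ = trace (W₁ * (Φ₁ᵀ * Φ₂) * W₂ᵀ * (Ψ₂ᵀ * Ψ₁)) := by
        simp only [Matrix.mul_assoc]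

/-- For the embedding operators, `Wₘ = (Kₘ + λI)⁻¹` is symmetric, so the transposes on the right
disappear. -/
theorem cond_embedding_frobenius_dist_general [CommRing R]
    (Φ₁ : Matrix d n₁ R) (Ψ₁ : Matrix p m₁ R) (W₁ : Matrix m₁ n₁ R)
    (Φ₂ : Matrix d n₂ R) (Ψ₂ : Matrix p m₂ R) (W₂ : Matrix m₂ n₂ R) :
    trace ((Ψ₁ * W₁ * Φ₁ᵀ - Ψ₂ * W₂ * Φ₂ᵀ)ᵀ * (Ψ₁ * W₁ * Φ₁ᵀ - Ψ₂ * W₂ * Φ₂ᵀ)) =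
      trace (W₁ * (Φ₁ᵀ * Φ₁) * W₁ᵀ * (Ψ₁ᵀ * Ψ₁))
      - 2 * trace (W₁ * (Φ₁ᵀ * Φ₂) * W₂ᵀ * (Ψ₂ᵀ * Ψ₁))
      + trace (W₂ * (Φ₂ᵀ * Φ₂) * W₂ᵀ * (Ψ₂ᵀ * Ψ₂)) := by
  simp only [trace_transpose_mul_self_sub, trace_transpose_mul_eq_trace_gram]

end GramMatrices

/-- Eq. (19) of the paper: closed-form expression, via the kernel trick, for the squared
Frobenius distance `‖O₁ − O₂‖² = tr((O₁ − O₂)ᵀ(O₁ − O₂))` between two empirical conditional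
kernel embedding operators `Oₘ = Ψₘ(Kₘ + λI)⁻¹Φₘᵀ`. -/
theorem cond_embedding_frobenius_dist (d p n₁ n₂ : ℕ) (lam : ℝ) (hlam : 0 < lam)
    (Φ₁ : Matrix (Fin d) (Fin n₁) ℝ) (Ψ₁ : Matrix (Fin p) (Fin n₁) ℝ)
    (Φ₂ : Matrix (Fin d) (Fin n₂) ℝ) (Ψ₂ : Matrix (Fin p) (Fin n₂) ℝ)
    (K₁ : Matrix (Fin n₁) (Fin n₁) ℝ) (hK₁ : K₁ = Φ₁ᵀ * Φ₁)
    (K₂ : Matrix (Fin n₂) (Fin n₂) ℝ) (hK₂ : K₂ = Φ₂ᵀ * Φ₂)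
    (L₁ : Matrix (Fin n₁) (Fin n₁) ℝ) (hL₁ : L₁ = Ψ₁ᵀ * Ψ₁)
    (L₂ : Matrix (Fin n₂) (Fin n₂) ℝ) (hL₂ : L₂ = Ψ₂ᵀ * Ψ₂)
    (K₁₂ : Matrix (Fin n₁) (Fin n₂) ℝ) (hK₁₂ : K₁₂ = Φ₁ᵀ * Φ₂)
    (L₂₁ : Matrix (Fin n₂) (Fin n₁) ℝ) (hL₂₁ : L₂₁ = Ψ₂ᵀ * Ψ₁)
    (O₁ : Matrix (Fin p) (Fin d) ℝ)
    (hO₁ : O₁ = Ψ₁ * (K₁ + lam • (1 : Matrix (Fin n₁) (Fin n₁) ℝ))⁻¹ * Φ₁ᵀ)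
    (O₂ : Matrix (Fin p) (Fin d) ℝ)
    (hO₂ : O₂ = Ψ₂ * (K₂ + lam • (1 : Matrix (Fin n₂) (Fin n₂) ℝ))⁻¹ * Φ₂ᵀ) :
    Matrix.trace ((O₁ - O₂)ᵀ * (O₁ - O₂)) =
      Matrix.trace ((K₁ + lam • (1 : Matrix (Fin n₁) (Fin n₁) ℝ))⁻¹ * K₁ *
          (K₁ + lam • (1 : Matrix (Fin n₁) (Fin n₁) ℝ))⁻¹ * L₁)
      - 2 * Matrix.trace ((K₁ + lam • (1 : Matrix (Fin n₁) (Fin n₁) ℝ))⁻¹ * K₁₂ *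
          (K₂ + lam • (1 : Matrix (Fin n₂) (Fin n₂) ℝ))⁻¹ * L₂₁)
      + Matrix.trace ((K₂ + lam • (1 : Matrix (Fin n₂) (Fin n₂) ℝ))⁻¹ * K₂ *
          (K₂ + lam • (1 : Matrix (Fin n₂) (Fin n₂) ℝ))⁻¹ * L₂) := by
  subst hK₁ hK₂ hL₁ hL₂ hK₁₂ hL₂₁ hO₁ hO₂
  rw [cond_embedding_frobenius_dist_general,
    (isSymm_inv_transpose_mul_self_add_smul_one Φ₁ lam).eq,
    (isSymm_inv_transpose_mul_self_add_smul_one Φ₂ lam).eq]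
end

section
/- Let d and n be natural numbers, λ > 0 a real number, Φ a real d×n matrix, and φ₀ ∈ ℝ^d. Define K = ΦᵀΦ, k = Φᵀφ₀, and σ² = φ₀ᵀφ₀ − kᵀ(K + λI)⁻¹k. Then λ · ‖(K + λI)⁻¹k‖² ≤ σ², where ‖·‖ is the Euclidean norm on ℝⁿ; equivalently, kᵀ(K+λI)⁻²k ≤ σ²/λ. -/
open Matrix

/-! With `w = (K + λI)⁻¹k` and the residual `r = φ₀ - Φw`, the normal equations read `Φᴴr = λw`,
so `⟨Φw, r⟩ = ⟨w, Φᴴr⟩ = λ‖w‖²`. Hence `σ² = ⟨φ₀, r⟩ = ⟨r + Φw, r⟩ = ‖r‖² + λ‖w‖² ≥ λ‖w‖²`. -/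

theorem isUnit_conjTranspose_mul_self_add_smul_one {m n 𝕜 : Type*} [Fintype m] [Fintype n]
    [DecidableEq n] [Field 𝕜] [PartialOrder 𝕜] [StarRing 𝕜] [StarOrderedRing 𝕜] {lam : 𝕜}
    (hlam : 0 < lam) (Φ : Matrix m n 𝕜) : IsUnit (Φᴴ * Φ + lam • (1 : Matrix n n 𝕜)) :=
  (PosDef.posSemidef_add (posSemidef_conjTranspose_mul_self Φ) (PosDef.one.smul hlam)).isUnit

section RidgeRegression

variable {m n R : Type*} [Fintype m] [Fintype n] [CommRing R] [StarRing R]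

theorem star_dotProduct_self_sub_eq_residual_add_of_normal_equations {lam : R} {Φ : Matrix m n R}
    {φ₀ : m → R} {w : n → R} (hw : Φᴴ *ᵥ (φ₀ - Φ *ᵥ w) = lam • w) :
    star φ₀ ⬝ᵥ φ₀ - star (Φᴴ *ᵥ φ₀) ⬝ᵥ w =
      star (φ₀ - Φ *ᵥ w) ⬝ᵥ (φ₀ - Φ *ᵥ w) + lam * (star w ⬝ᵥ w) := by
  set r := φ₀ - Φ *ᵥ w with hr
  have fitted_dotProduct_residual : star (Φ *ᵥ w) ⬝ᵥ r = lam * (star w ⬝ᵥ w) := by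
    rw [star_mulVec, ← dotProduct_mulVec, hw, dotProduct_smul, smul_eq_mul]
  calc star φ₀ ⬝ᵥ φ₀ - star (Φᴴ *ᵥ φ₀) ⬝ᵥ w
      = star φ₀ ⬝ᵥ r := by
        rw [star_mulVec, conjTranspose_conjTranspose, ← dotProduct_mulVec, ← dotProduct_sub]
    _ = star r ⬝ᵥ r + star (Φ *ᵥ w) ⬝ᵥ r := by
        rw [← add_dotProduct, ← star_add, hr, sub_add_cancel]
    _ = star r ⬝ᵥ r + lam * (star w ⬝ᵥ w) := by rw [fitted_dotProduct_residual]

variable [DecidableEq n]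

/-- The weights `w = (K + λI)⁻¹k` which the kernel ridge predictor `wᴴy` at a context with feature
vector `φ₀` gives to the observations `y`, where `K = ΦᴴΦ` and `k = Φᴴφ₀`; the transposes are
conjugated so that complex features are covered. They are `0` when `K + λI` is singular. -/
noncomputable def ridgeWeights (lam : R) (Φ : Matrix m n R) (φ₀ : m → R) : n → R :=
  (Φᴴ * Φ + lam • (1 : Matrix n n R))⁻¹ *ᵥ (Φᴴ *ᵥ φ₀)

theorem conjTranspose_mulVec_sub_mulVec_ridgeWeights {lam : R} {Φ : Matrix m n R}
    (hK : IsUnit (Φᴴ * Φ + lam • (1 : Matrix n n R))) (φ₀ : m → R) :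
    Φᴴ *ᵥ (φ₀ - Φ *ᵥ ridgeWeights lam Φ φ₀) = lam • ridgeWeights lam Φ φ₀ := by
  have solves : (Φᴴ * Φ + lam • (1 : Matrix n n R)) *ᵥ ridgeWeights lam Φ φ₀ = Φᴴ *ᵥ φ₀ := by
    rw [ridgeWeights, mulVec_mulVec, mul_nonsing_inv _ ((isUnit_iff_isUnit_det _).mp hK),
      one_mulVec]
  rw [mulVec_sub, ← solves, add_mulVec, mulVec_mulVec, smul_mulVec, one_mulVec,
    add_sub_cancel_left]

theorem weight_norm_le_width_general [PartialOrder R] [StarOrderedRing R] {lam : R}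
    {Φ : Matrix m n R} (hK : IsUnit (Φᴴ * Φ + lam • (1 : Matrix n n R))) (φ₀ : m → R) :
    lam * (star (ridgeWeights lam Φ φ₀) ⬝ᵥ ridgeWeights lam Φ φ₀) ≤
      star φ₀ ⬝ᵥ φ₀ - star (Φᴴ *ᵥ φ₀) ⬝ᵥ ridgeWeights lam Φ φ₀ := by
  rw [star_dotProduct_self_sub_eq_residual_add_of_normal_equations
    (conjTranspose_mulVec_sub_mulVec_ridgeWeights hK φ₀)]
  exact le_add_of_nonneg_left (dotProduct_star_self_nonneg _)

end RidgeRegression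

/-- Bound on the ridge weight vector `w = (K + λI)⁻¹ k` in terms of the squared
confidence width: `λ‖w‖² ≤ σ² = φ₀ᵀφ₀ − kᵀ(K + λI)⁻¹k`, where `K = ΦᵀΦ`, `k = Φᵀφ₀`,
and `‖·‖` is the Euclidean norm. -/
theorem weight_norm_le_width (d n : ℕ) (lam : ℝ) (hlam : 0 < lam)
    (Φ : Matrix (Fin d) (Fin n) ℝ) (φ₀ : Fin d → ℝ) :
    lam * ‖(WithLp.equiv 2 (Fin n → ℝ)).symm
        ((Φᵀ * Φ + lam • (1 : Matrix (Fin n) (Fin n) ℝ))⁻¹.mulVec (Φᵀ.mulVec φ₀))‖ ^ 2 ≤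
      φ₀ ⬝ᵥ φ₀ -
        (Φᵀ.mulVec φ₀) ⬝ᵥ
          ((Φᵀ * Φ + lam • (1 : Matrix (Fin n) (Fin n) ℝ))⁻¹.mulVec (Φᵀ.mulVec φ₀)) := by
  rw [EuclideanSpace.real_norm_sq_eq]
  simpa [ridgeWeights, dotProduct, sq] using
    weight_norm_le_width_general (isUnit_conjTranspose_mul_self_add_smul_one hlam Φ) φ₀
end

section
/- Let d and n be natural numbers, λ > 0 a real number, Φ a real d×n matrix, φ₀ ∈ ℝ^d, and θ ∈ ℝ^d. Define K = ΦᵀΦ, k = Φᵀφ₀, and σ = sqrt(φ₀ᵀφ₀ − kᵀ(K + λI)⁻¹k). Then |kᵀ(K + λI)⁻¹Φᵀθ − φ₀ᵀθ| ≤ ‖θ‖ · σ, where ‖θ‖ is the Euclidean norm. -/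
open Matrix

/-!
Let `v` be feature vectors with Gram matrix `K`, and `R` a regularizer, such as `λI`. The ridge
weights `w = (K + R)⁻¹k` at a feature vector `x` define an approximation `p = ∑ wᵢvᵢ` of `x`, and
symmetry of `K + R` turns the noiseless prediction into `⟪p, θ⟫`. The bias is therefore
`⟪p - x, θ⟫`, which Cauchy–Schwarz bounds by `‖θ‖ · ‖x - p‖`. Testing the equation `(K + R)w = k`
against `w` gives `⟪p, x⟫ = ‖p‖² + w*Rw`, so that `‖x - p‖² = (‖x‖² - k*w) - w*Rw ≤ σ²`.
-/

section FeatureVectors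

open scoped ComplexOrder

variable {𝕜 E n : Type*} [RCLike 𝕜] [SeminormedAddCommGroup E] [InnerProductSpace 𝕜 E]

variable (𝕜) in
/-- The vector `k` of kernel evaluations between the feature vectors `v` and a feature vector `x`.
The argument `x` is in the second slot of the inner product, so `kernelVec 𝕜 v` is linear in it,
and `kernelVec 𝕜 v (v j)` is the `j`-th column of `gram 𝕜 v`. -/
def kernelVec (v : n → E) (x : E) : n → 𝕜 := fun i => inner 𝕜 (v i) x

variable [Fintype n] {v : n → E} {R : Matrix n n 𝕜}

theorem star_dotProduct_kernelVec (w : n → 𝕜) (x : E) :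
    star w ⬝ᵥ kernelVec 𝕜 v x = inner 𝕜 (∑ i, w i • v i) x := by
  simp [kernelVec, dotProduct, sum_inner, inner_smul_left]

theorem inner_sum_smul_eq_of_gram_add_mulVec_eq {w : n → 𝕜} {x : E}
    (hw : (gram 𝕜 v + R) *ᵥ w = kernelVec 𝕜 v x) :
    inner 𝕜 (∑ i, w i • v i) x =
      inner 𝕜 (∑ i, w i • v i) (∑ i, w i • v i) + star w ⬝ᵥ R *ᵥ w := by
  rw [← star_dotProduct_kernelVec, ← hw, add_mulVec, dotProduct_add, star_dotProduct_gram_mulVec]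

theorem norm_sub_sum_smul_sq_eq_of_gram_add_mulVec_eq {w : n → 𝕜} {x : E}
    (hw : (gram 𝕜 v + R) *ᵥ w = kernelVec 𝕜 v x) :
    ‖x - ∑ i, w i • v i‖ ^ 2 =
      ‖x‖ ^ 2 - RCLike.re (star (kernelVec 𝕜 v x) ⬝ᵥ w) - RCLike.re (star w ⬝ᵥ R *ᵥ w) := by
  set p := ∑ i, w i • v i
  have re_inner_eq : RCLike.re (inner 𝕜 p x) = ‖p‖ ^ 2 + RCLike.re (star w ⬝ᵥ R *ᵥ w) := by
    rw [inner_sum_smul_eq_of_gram_add_mulVec_eq hw, map_add, inner_self_eq_norm_sq]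
  have re_star_kernelVec : RCLike.re (star (kernelVec 𝕜 v x) ⬝ᵥ w) = RCLike.re (inner 𝕜 p x) := by
    rw [star_dotProduct, star_dotProduct_kernelVec, RCLike.star_def, RCLike.conj_re]
  rw [norm_sub_sq (𝕜 := 𝕜), inner_re_symm, re_star_kernelVec]
  linarith

theorem norm_sub_sum_smul_le_sqrt_of_gram_add_mulVec_eq (hR : R.PosSemidef) {w : n → 𝕜} {x : E}
    (hw : (gram 𝕜 v + R) *ᵥ w = kernelVec 𝕜 v x) :
    ‖x - ∑ i, w i • v i‖ ≤
      Real.sqrt (‖x‖ ^ 2 - RCLike.re (star (kernelVec 𝕜 v x) ⬝ᵥ w)) := by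
  have penalty_nonneg : 0 ≤ RCLike.re (star w ⬝ᵥ R *ᵥ w) :=
    (RCLike.nonneg_iff.mp (hR.dotProduct_mulVec_nonneg w)).1
  apply Real.le_sqrt_of_sq_le
  rw [norm_sub_sum_smul_sq_eq_of_gram_add_mulVec_eq hw]
  exact sub_le_self _ penalty_nonneg

variable [DecidableEq n]

theorem star_kernelVec_dotProduct_inv_mulVec_kernelVec {A : Matrix n n 𝕜} (hA : A.IsHermitian)
    (x θ : E) :
    star (kernelVec 𝕜 v x) ⬝ᵥ A⁻¹ *ᵥ kernelVec 𝕜 v θ =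
      inner 𝕜 (∑ i, (A⁻¹ *ᵥ kernelVec 𝕜 v x) i • v i) θ := by
  rw [← star_dotProduct_kernelVec, star_mulVec, hA.inv.eq, dotProduct_mulVec]

theorem ridge_bias_bound_general (hR : R.PosSemidef) (hKR : IsUnit (gram 𝕜 v + R)) (x θ : E) :
    ‖star (kernelVec 𝕜 v x) ⬝ᵥ (gram 𝕜 v + R)⁻¹ *ᵥ kernelVec 𝕜 v θ - inner 𝕜 x θ‖ ≤
      ‖θ‖ * Real.sqrt (‖x‖ ^ 2 -
        RCLike.re (star (kernelVec 𝕜 v x) ⬝ᵥ (gram 𝕜 v + R)⁻¹ *ᵥ kernelVec 𝕜 v x)) := by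
  set w := (gram 𝕜 v + R)⁻¹ *ᵥ kernelVec 𝕜 v x with w_def
  have hw : (gram 𝕜 v + R) *ᵥ w = kernelVec 𝕜 v x := by
    rw [w_def, mulVec_mulVec, mul_nonsing_inv _ ((isUnit_iff_isUnit_det _).mp hKR), one_mulVec]
  rw [star_kernelVec_dotProduct_inv_mulVec_kernelVec ((isHermitian_gram 𝕜 v).add hR.isHermitian),
    ← inner_sub_left]
  calc ‖inner 𝕜 (∑ i, w i • v i - x) θ‖
      ≤ ‖∑ i, w i • v i - x‖ * ‖θ‖ := norm_inner_le_norm _ _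
    _ = ‖θ‖ * ‖x - ∑ i, w i • v i‖ := by rw [norm_sub_rev, mul_comm]
    _ ≤ _ := by gcongr; exact norm_sub_sum_smul_le_sqrt_of_gram_add_mulVec_eq hR hw

end FeatureVectors

section FeatureMatrix

variable {𝕜 m n : Type*} [RCLike 𝕜] [Fintype m]

theorem gram_toLp_col (Φ : Matrix m n 𝕜) : gram 𝕜 (fun j => WithLp.toLp 2 (Φ.col j)) = Φᴴ * Φ := by
  ext i j
  simp [mul_apply, PiLp.inner_apply, mul_comm]

theorem kernelVec_toLp_col (Φ : Matrix m n 𝕜) (x : m → 𝕜) :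
    kernelVec 𝕜 (fun j => WithLp.toLp 2 (Φ.col j)) (WithLp.toLp 2 x) = Φᴴ *ᵥ x := by
  ext i
  simp [kernelVec, mulVec, dotProduct, PiLp.inner_apply, mul_comm]

end FeatureMatrix

/-- Deterministic (bias) part of the confidence bound of the paper's Theorem 1, in a
finite-dimensional feature space: the noiseless kernel ridge prediction
`kᵀ(K + λI)⁻¹Φᵀθ` deviates from the true value `φ₀ᵀθ` by at most `‖θ‖ · σ`, where
`K = ΦᵀΦ`, `k = Φᵀφ₀`, and `σ = sqrt(φ₀ᵀφ₀ − kᵀ(K + λI)⁻¹k)`. -/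
theorem ridge_bias_bound (d n : ℕ) (lam : ℝ) (hlam : 0 < lam)
    (Φ : Matrix (Fin d) (Fin n) ℝ) (φ₀ θ : Fin d → ℝ) :
    |(Φᵀ.mulVec φ₀) ⬝ᵥ
        ((Φᵀ * Φ + lam • (1 : Matrix (Fin n) (Fin n) ℝ))⁻¹.mulVec (Φᵀ.mulVec θ)) -
      φ₀ ⬝ᵥ θ| ≤
      ‖(WithLp.equiv 2 (Fin d → ℝ)).symm θ‖ *
        Real.sqrt (φ₀ ⬝ᵥ φ₀ -
          (Φᵀ.mulVec φ₀) ⬝ᵥ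
            ((Φᵀ * Φ + lam • (1 : Matrix (Fin n) (Fin n) ℝ))⁻¹.mulVec (Φᵀ.mulVec φ₀))) := by
  have hR : (lam • (1 : Matrix (Fin n) (Fin n) ℝ)).PosDef := PosDef.one.smul hlam
  have norm_sq_eq : ‖WithLp.toLp 2 φ₀‖ ^ 2 = φ₀ ⬝ᵥ φ₀ := by
    rw [← real_inner_self_eq_norm_sq, EuclideanSpace.inner_toLp_toLp, star_trivial]
  simpa [gram_toLp_col, kernelVec_toLp_col, conjTranspose_eq_transpose_of_trivial,
    EuclideanSpace.inner_toLp_toLp, dotProduct_comm θ, norm_sq_eq] using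
    ridge_bias_bound_general hR.posSemidef (hR.posSemidef_add (posSemidef_gram ℝ _)).isUnit
      (v := fun j => WithLp.toLp 2 (Φ.col j)) (WithLp.toLp 2 φ₀) (WithLp.toLp 2 θ)
end
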